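/- arXiv:1901.05396 — 3 statements merged into one kernel-verified Lean document; each statement's English description precedes it below -/
import Mathlib

section
/- Let (X,d) be a metric space. Then U(X) is a ring if and only if X is ℝ-fine, that is, for every uniformly continuous function f : X → ℝ and every continuous function g : ℝ → ℝ, the composition g ∘ f is uniformly continuous. -/
/-- `U(X)` is a ring: the pointwise product of any two uniformly continuous
real-valued functions on `X` is uniformly continuous. -/
def IsRingUC (X : Type*) [MetricSpace X] : Prop :=
  ∀ f g : X → ℝ, UniformContinuous f → UniformContinuous g →
    UniformContinuous (fun x => f x * g x)

/-!
Suppose multiplication by `F` maps the Banach space of bounded uniformly continuous functions into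
the uniformly continuous ones, and let `(xₙ, yₙ)` be pairs of distinct points with
`d(xₙ, yₙ) → 0`. The functionals `u ↦ F xₙ * u xₙ - F yₙ * u yₙ` tend to `0` pointwise, so by
Banach–Steinhaus their norms are bounded; evaluating them at bumps which are `1` at `xₙ` and `0` at
`yₙ` bounds `|F xₙ|`. Hence the points where `|F|` is large are uniformly isolated. If `U(X)` is a
ring, this applies to every `F ∈ U(X)`; a continuous `g` is uniformly continuous near the compact
set where the remaining values of `F` lie, so `g ∘ F` is uniformly continuous. Conversely, products
are obtained from squares by polarization.
-/

open Filter Topology Uniformity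
open scoped BoundedContinuousFunction

section BoundedUniformContinuous

variable (X E : Type*) [UniformSpace X] [NormedAddCommGroup E] [NormedSpace ℝ E]

/-- The space of bounded uniformly continuous functions `X → E` with the supremum norm, encoded as a
subspace of the bounded continuous functions so that it inherits their norm. -/
def boundedUniformContinuous : Submodule ℝ (X →ᵇ E) where
  carrier := {u | UniformContinuous u}
  zero_mem' := uniformContinuous_const
  add_mem' hu hv := hu.add hv
  smul_mem' c _ hu := hu.const_smul c

theorem isClosed_boundedUniformContinuous :
    IsClosed (boundedUniformContinuous X E : Set (X →ᵇ E)) := by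
  refine isClosed_of_closure_subset fun u hu ↦ ?_
  obtain ⟨v, hv, hvu⟩ := mem_closure_iff_seq_limit.mp hu
  exact (BoundedContinuousFunction.tendsto_iff_tendstoUniformly.mp hvu).uniformContinuous
    (Frequently.of_forall hv)

instance [CompleteSpace E] : CompleteSpace (boundedUniformContinuous X E) :=
  (isClosed_boundedUniformContinuous X E).completeSpace_coe

end BoundedUniformContinuous

section CountablyGenerated

variable {X : Type*} [UniformSpace X] [IsCountablyGenerated (𝓤 X)]

theorem exists_boundedUniformContinuous_eq_one_eq_zero {x y : X} (hxy : ¬Inseparable x y) :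
    ∃ u : boundedUniformContinuous X ℝ, ‖u‖ ≤ 1 ∧ u.1 x = 1 ∧ u.1 y = 0 := by
  let := UniformSpace.pseudoMetricSpace X
  have dist_pos : 0 < dist y x :=
    dist_nonneg.lt_of_ne' fun h ↦ hxy (Metric.inseparable_iff.mpr h).symm
  set bump := thickenedIndicator dist_pos {x}
  have bump_uc : UniformContinuous fun z ↦ (bump z : ℝ) :=
    uniformContinuous_subtype_val.comp
      (lipschitzWith_thickenedIndicator dist_pos {x}).uniformContinuous
  have norm_bump_le (z : X) : ‖(bump z : ℝ)‖ ≤ 1 :=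
    (NNReal.norm_eq _).trans_le (thickenedIndicator_le_one dist_pos {x} z)
  have bump_x : bump x = 1 := thickenedIndicator_one dist_pos {x} rfl
  have bump_y : bump y = 0 := thickenedIndicator_zero dist_pos {x} (by simp)
  exact ⟨⟨.ofNormedAddCommGroup _ bump_uc.continuous 1 norm_bump_le, bump_uc⟩,
    BoundedContinuousFunction.norm_ofNormedAddCommGroup_le _ zero_le_one norm_bump_le,
    congrArg NNReal.toReal bump_x, congrArg NNReal.toReal bump_y⟩

variable {F : X → ℝ}

theorem exists_abs_le_of_uniformContinuous_mul
    (hF : ∀ u ∈ boundedUniformContinuous X ℝ, UniformContinuous fun z ↦ F z * u z)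
    {p : ℕ → X × X} (hp : Tendsto p atTop (𝓤 X)) (hsep : ∀ n, ¬Inseparable (p n).1 (p n).2) :
    ∃ C, ∀ n, |F (p n).1| ≤ C := by
  let eval (z : X) : boundedUniformContinuous X ℝ →L[ℝ] ℝ :=
    (BoundedContinuousFunction.evalCLM ℝ z).comp (Submodule.subtypeL _)
  let increment (n : ℕ) : boundedUniformContinuous X ℝ →L[ℝ] ℝ :=
    F (p n).1 • eval (p n).1 - F (p n).2 • eval (p n).2
  have increment_apply (n : ℕ) (u : boundedUniformContinuous X ℝ) :
      increment n u = F (p n).1 * u.1 (p n).1 - F (p n).2 * u.1 (p n).2 := rfl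
  have increment_bounded (u : boundedUniformContinuous X ℝ) : ∃ C, ∀ n, ‖increment n u‖ ≤ C := by
    have tendsto_zero : Tendsto (fun n ↦ ‖increment n u‖) atTop (𝓝 0) :=
      tendsto_uniformity_iff_dist_tendsto_zero.mp (Tendsto.comp (hF u.1 u.2) hp)
    obtain ⟨C, hC⟩ := tendsto_zero.bddAbove_range
    exact ⟨C, fun n ↦ hC ⟨n, rfl⟩⟩
  obtain ⟨C, norm_increment_le⟩ := banach_steinhaus increment_bounded
  refine ⟨C, fun n ↦ ?_⟩
  obtain ⟨u, norm_u, u_fst, u_snd⟩ := exists_boundedUniformContinuous_eq_one_eq_zero (hsep n)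
  calc |F (p n).1| = ‖increment n u‖ := by simp [increment_apply, u_fst, u_snd]
    _ ≤ ‖increment n‖ := (increment n).unit_le_opNorm u norm_u
    _ ≤ C := norm_increment_le n

theorem exists_eventually_uniformity_inseparable
    (hF : ∀ u ∈ boundedUniformContinuous X ℝ, UniformContinuous fun z ↦ F z * u z) :
    ∃ M, ∀ᶠ p in 𝓤 X, M < |F p.1| → Inseparable p.1 p.2 := by
  by_contra! hcon
  obtain ⟨V, hV⟩ := (𝓤 X).exists_antitone_basis
  have exists_pair (n : ℕ) : ∃ p ∈ V n, n < |F p.1| ∧ ¬Inseparable p.1 p.2 :=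
    frequently_iff.mp (hcon n) (hV.mem n)
  choose p hpV lt_abs hsep using exists_pair
  obtain ⟨C, hC⟩ := exists_abs_le_of_uniformContinuous_mul hF (hV.tendsto hpV) hsep
  obtain ⟨n, hn⟩ := exists_nat_ge C
  exact (lt_abs n).not_ge ((hC n).trans hn)

end CountablyGenerated

theorem uniformContinuous_comp_of_eventually_inseparable {X Y Z : Type*} [UniformSpace X]
    [UniformSpace Y] [UniformSpace Z] {f : X → Y} {g : Y → Z} {K : Set Y}
    (hf : UniformContinuous f) (hg : Continuous g) (hK : IsCompact K)
    (hsep : ∀ᶠ p in 𝓤 X, f p.1 ∉ K → Inseparable p.1 p.2) : UniformContinuous (g ∘ f) := by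
  intro V hV
  rw [mem_map]
  have near_K := hf (hK.uniformContinuousAt_of_continuousAt g (fun _ _ ↦ hg.continuousAt) hV)
  filter_upwards [near_K, hsep] with p g_close inseparable
  by_cases hp : f p.1 ∈ K
  · exact g_close hp
  · exact inseparable_iff_ker_uniformity.mp
      ((inseparable hp).map (hg.comp hf.continuous)) V hV

theorem uniformContinuous_mul_of_forall_sq {X : Type*} [UniformSpace X]
    (hsq : ∀ f : X → ℝ, UniformContinuous f → UniformContinuous fun x ↦ f x ^ 2)
    {f g : X → ℝ} (hf : UniformContinuous f) (hg : UniformContinuous g) :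
    UniformContinuous fun x ↦ f x * g x := by
  have polarization (x : X) : f x * g x = ((f x + g x) ^ 2 - (f x - g x) ^ 2) / 4 := by ring
  simp only [polarization]
  exact ((hsq _ (hf.add hg)).sub (hsq _ (hf.sub hg))).div_const' 4

theorem stmt2_general {X : Type*} [UniformSpace X] [IsCountablyGenerated (𝓤 X)] :
    (∀ f g : X → ℝ, UniformContinuous f → UniformContinuous g →
      UniformContinuous (fun x => f x * g x)) ↔
      ∀ f : X → ℝ, UniformContinuous f →
        ∀ g : ℝ → ℝ, Continuous g → UniformContinuous (g ∘ f) := by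
  constructor
  · intro hmul f hf g hg
    obtain ⟨M, hM⟩ := exists_eventually_uniformity_inseparable fun u ↦ hmul f u hf
    refine uniformContinuous_comp_of_eventually_inseparable hf hg
      (isCompact_closedBall (0 : ℝ) M) ?_
    simpa using hM
  · intro hcomp f g hf hg
    exact uniformContinuous_mul_of_forall_sq
      (fun f hf ↦ hcomp f hf (· ^ 2) (continuous_pow 2)) hf hg

theorem stmt2 {X : Type*} [MetricSpace X] :
    IsRingUC X ↔
      ∀ f : X → ℝ, UniformContinuous f →
        ∀ g : ℝ → ℝ, Continuous g → UniformContinuous (g ∘ f) :=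
  stmt2_general
end

section
/- Let (X,d) be a metric space. Then U(X) is a ring if and only if there exists a Bourbaki bounded set F ⊆ X such that for every ε > 0 there is n ∈ ℕ for which X \ Bⁿ(F,ε) is uniformly isolated. -/
/-- `A` is Bourbaki bounded in `X`: every uniformly continuous real-valued
function on `X` is bounded on `A`. -/
def BourbakiBounded {X : Type*} [MetricSpace X] (A : Set X) : Prop :=
  ∀ f : X → ℝ, UniformContinuous f → ∃ M : ℝ, ∀ x ∈ A, |f x| ≤ M

/-- `A` is uniformly isolated: there is `ε > 0` such that `B(x,ε) = {x}` for all `x ∈ A`. -/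
def UnifIsolated {X : Type*} [MetricSpace X] (A : Set X) : Prop :=
  ∃ ε > (0 : ℝ), ∀ x ∈ A, Metric.ball x ε = {x}

/-- The open `ε`-enlargement `B(F,ε)` of a set `F`. -/
def enl {X : Type*} [MetricSpace X] (F : Set X) (ε : ℝ) : Set X :=
  ⋃ x ∈ F, Metric.ball x ε

/-- `enlIter F ε n` is the `(n+1)`-fold iterated enlargement `Bⁿ⁺¹(F,ε)`;
so as `n` ranges over `ℕ`, all positive iterates `Bⁿ(F,ε)` occur. -/
def enlIter {X : Type*} [MetricSpace X] (F : Set X) (ε : ℝ) : ℕ → Set X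
  | 0 => enl F ε
  | n + 1 => enl (enlIter F ε n) ε

/-
A ring `U(X)` forces every uniformly continuous `f` to be bounded on the set of points that are not
`δ`-isolated, for some `δ > 0`: otherwise there are pairs `x n ≠ y n` with `dist (x n) (y n) → 0`
and `f (x n)` growing fast, and `f` times a sum of bumps of height `1 / f (x n)` at `x n`, vanishing
at `y n`, is `1` at `x n` and `0` at `y n`. So the non-`1 / (k + 1)`-isolated points form a
decreasing sequence of sets `A k` such that every uniformly continuous function is bounded on one of
them. As in Hejcman's characterization of Bourbaki bounded sets, for each `ε` some `A k` is then
reached by `ε`-chains of bounded length from a finite set, which can be chosen inside any prescribed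
`A m`: otherwise the number of steps of `ε`-chains from a suitable sequence of points, smoothed at
scale `ε`, would be unbounded on every `A k`. Take for `F` the union over `m` of such finite sets
for `ε = 1 / (m + 1)`.

Conversely, both factors of a product are bounded on some `Bⁿ(F, ε)`, and uniform continuity needs
to be checked only there because all points off this set are `δ`-isolated for one `δ`.
-/

open Set Filter Topology Metric

section UniformSpace

variable {Y : Type*} [UniformSpace Y]

lemma uniformContinuousOn_mul_of_bounded {f g : Y → ℝ} {s : Set Y} {M N : ℝ}
    (hf : UniformContinuousOn f s) (hg : UniformContinuousOn g s)
    (hM : ∀ x ∈ s, |f x| ≤ M) (hN : ∀ x ∈ s, |g x| ≤ N) :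
    UniformContinuousOn (fun x => f x * g x) s := by
  have mul_box : UniformContinuousOn (fun p : ℝ × ℝ => p.1 * p.2) (Icc (-M) M ×ˢ Icc (-N) N) :=
    (isCompact_Icc.prod isCompact_Icc).uniformContinuousOn_of_continuous continuous_mul.continuousOn
  have pair_uc : UniformContinuousOn (fun x => (f x, g x)) s := by
    rw [uniformContinuousOn_iff_restrict] at hf hg ⊢
    exact hf.prodMk hg
  exact mul_box.comp pair_uc fun x hx => ⟨abs_le.1 (hM x hx), abs_le.1 (hN x hx)⟩

lemma uniformContinuous_tsum {ι E : Type*} [NormedAddCommGroup E] [CompleteSpace E]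
    {f : ι → Y → E} {u : ι → ℝ} (hf : ∀ i, UniformContinuous (f i)) (hu : Summable u)
    (hfu : ∀ i x, ‖f i x‖ ≤ u i) : UniformContinuous fun x => ∑' i, f i x := by
  refine (tendstoUniformly_tsum hu hfu).uniformContinuous (Frequently.of_forall fun t => ?_)
  induction t using Finset.cons_induction with
  | empty => simpa only [Finset.sum_empty] using uniformContinuous_const
  | cons i t hi ih => simpa only [Finset.sum_cons] using (hf i).add ih

end UniformSpace

section PseudoMetricSpace

variable {Y : Type*} [PseudoMetricSpace Y]

lemma exists_uniformContinuous_interpolation {ι : Type*} {x : ι → Y} {r a : ι → ℝ}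
    (hr : ∀ i, 0 < r i) (ha : Summable fun i => |a i|) :
    ∃ g : Y → ℝ, UniformContinuous g ∧ (∀ z, (∀ i, z ∉ ball (x i) (r i)) → g z = 0) ∧
      ∀ i, (∀ j ≠ i, x i ∉ ball (x j) (r j)) → g (x i) = a i := by
  let bump (i : ι) (z : Y) : ℝ := thickenedIndicator (hr i) {x i} z
  have bump_uc (i : ι) : UniformContinuous (bump i) :=
    uniformContinuous_subtype_val.comp (lipschitzWith_thickenedIndicator (hr i) _).uniformContinuous
  have bump_le_one (i : ι) (z : Y) : |bump i z| ≤ 1 := by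
    simpa [bump] using thickenedIndicator_le_one (hr i) {x i} z
  have bump_center (i : ι) : bump i (x i) = 1 := 
    congrArg NNReal.toReal (thickenedIndicator_one (hr i) _ (mem_singleton (x i)))
  have bump_outside (i : ι) (z : Y) (hz : z ∉ ball (x i) (r i)) : bump i z = 0 := by
    rw [← thickening_singleton] at hz
    exact congrArg NNReal.toReal (thickenedIndicator_zero (hr i) _ hz)
  refine ⟨fun z => ∑' i, a i * bump i z, uniformContinuous_tsum ?_ ha ?_, ?_, ?_⟩
  · exact fun i => (bump_uc i).const_mul' (a i)
  · intro i z
    rw [Real.norm_eq_abs, abs_mul]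
    exact mul_le_of_le_one_right (abs_nonneg _) (bump_le_one i z)
  · intro z hz
    simp [fun i => bump_outside i z (hz i)]
  · intro i hi
    calc ∑' j, a j * bump j (x i) = a i * bump i (x i) :=
          tsum_eq_single i fun j hj => by rw [bump_outside j _ (hi j hj), mul_zero]
      _ = a i := by rw [bump_center, mul_one]

lemma uniformContinuous_of_local_lipschitz {f : Y → ℝ} {K r : ℝ} (hr : 0 < r)
    (hf : ∀ x y, dist x y < r → f x ≤ f y + K * dist x y) : UniformContinuous f := by
  refine Metric.uniformContinuous_iff.2 fun e he => ?_
  have hK : 0 < |K| + 1 := by positivity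
  refine ⟨min r (e / (|K| + 1)), lt_min hr (by positivity), fun {x y} hxy => ?_⟩
  have hle : K * dist x y < e := calc
    K * dist x y ≤ (|K| + 1) * dist x y := by
      gcongr
      linarith [le_abs_self K]
    _ < e := (lt_div_iff₀' hK).1 (hxy.trans_le (min_le_right _ _))
  have hxr : dist x y < r := hxy.trans_le (min_le_left _ _)
  have h₁ := hf x y hxr
  have h₂ := hf y x (by rwa [dist_comm])
  rw [dist_comm y x] at h₂
  rw [Real.dist_eq, abs_lt]
  constructor <;> linarith

/-- The inf-convolution of `L` with the cone `K * dist`, restricted to balls of radius `ε`. It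
regularizes a function whose oscillation is controlled only at scale `ε`. -/
noncomputable def localInfConv (L : Y → ℝ) (K ε : ℝ) (x : Y) : ℝ :=
  ⨅ y : ball x ε, (L y + K * dist x y)

section LocalInfConv

variable {L : Y → ℝ} {C K ε : ℝ}

lemma sub_le_add_mul_dist_of_mem_ball (hK : 0 ≤ K)
    (hL : ∀ x y, dist x y < ε → |L x - L y| ≤ C) {x y : Y} (hy : y ∈ ball x ε) :
    L x - C ≤ L y + K * dist x y := by
  have hLxy := (abs_le.1 (hL x y (mem_ball'.1 hy))).2
  have hcone : 0 ≤ K * dist x y := by positivity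
  linarith

lemma localInfConv_le (hK : 0 ≤ K) (hL : ∀ x y, dist x y < ε → |L x - L y| ≤ C) {x y : Y}
    (hy : y ∈ ball x ε) : localInfConv L K ε x ≤ L y + K * dist x y := by
  have hbdd : BddBelow (range fun y : ball x ε => L y + K * dist x y) :=
    ⟨L x - C, forall_mem_range.2 fun y => sub_le_add_mul_dist_of_mem_ball hK hL y.2⟩
  exact ciInf_le hbdd ⟨y, hy⟩

lemma abs_localInfConv_sub_le (hε : 0 < ε) (hK : 0 ≤ K)
    (hL : ∀ x y, dist x y < ε → |L x - L y| ≤ C) (x : Y) : |localInfConv L K ε x - L x| ≤ C := by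
  have : Nonempty (ball x ε) := ⟨x, mem_ball_self hε⟩
  have hlower : L x - C ≤ localInfConv L K ε x :=
    le_ciInf fun y => sub_le_add_mul_dist_of_mem_ball hK hL y.2
  have hupper := localInfConv_le hK hL (mem_ball_self (x := x) hε)
  have hC : |L x - L x| ≤ C := hL x x (by rwa [dist_self])
  rw [sub_self, abs_zero] at hC
  rw [dist_self, mul_zero, add_zero] at hupper
  exact abs_le.2 ⟨by linarith, by linarith⟩

-- The slope `K` makes every competitor at distance at least `ε / 2` lose against the centre, so
-- the infimum does not notice that the ball moves with the point.
lemma localInfConv_le_add_dist (hε : 0 < ε) (hKC : K * (ε / 2) = C) (hK : 0 ≤ K)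
    (hL : ∀ x y, dist x y < ε → |L x - L y| ≤ C) {x y : Y} (hxy : dist x y < ε / 2) :
    localInfConv L K ε x ≤ localInfConv L K ε y + K * dist x y := by
  have : Nonempty (ball y ε) := ⟨y, mem_ball_self hε⟩
  refine sub_le_iff_le_add.1 (le_ciInf fun ⟨z, hz⟩ => sub_le_iff_le_add.2 ?_)
  rcases lt_or_ge (dist y z) (ε / 2) with hnear | hfar
  · have htri := dist_triangle x y z
    have hzx : z ∈ ball x ε := mem_ball'.2 (by linarith)
    calc localInfConv L K ε x ≤ L z + K * dist x z := localInfConv_le hK hL hzx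
      _ ≤ L z + K * (dist x y + dist y z) := by gcongr
      _ = L z + K * dist y z + K * dist x y := by ring
  · have hyx : y ∈ ball x ε := mem_ball'.2 (by linarith)
    have hcone : C ≤ K * dist y z := hKC ▸ mul_le_mul_of_nonneg_left hfar hK
    have hLyz := (abs_le.1 (hL y z (mem_ball'.1 hz))).2
    calc localInfConv L K ε x ≤ L y + K * dist x y := localInfConv_le hK hL hyx
      _ ≤ L z + K * dist y z + K * dist x y := by linarith

end LocalInfConv

lemma exists_uniformContinuous_abs_sub_le {L : Y → ℝ} {C ε : ℝ} (hε : 0 < ε) (hC : 0 ≤ C)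
    (hL : ∀ x y, dist x y < ε → |L x - L y| ≤ C) :
    ∃ f : Y → ℝ, UniformContinuous f ∧ ∀ x, |f x - L x| ≤ C := by
  have hK : 0 ≤ C / (ε / 2) := by positivity
  have hKC : C / (ε / 2) * (ε / 2) = C := div_mul_cancel₀ C (by positivity)
  exact ⟨localInfConv L (C / (ε / 2)) ε,
    uniformContinuous_of_local_lipschitz (half_pos hε) fun x y =>
      localInfConv_le_add_dist hε hKC hK hL,
    abs_localInfConv_sub_le hε hK hL⟩

end PseudoMetricSpace

lemma exists_strictMono_forall_lt_le {α : Type*} [Preorder α] {u : ℕ → α}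
    (hu : Tendsto u atTop atTop) (b : α → α) :
    ∃ φ : ℕ → ℕ, StrictMono φ ∧ ∀ m n, m < n → b (u (φ m)) ≤ u (φ n) := by
  obtain ⟨φ, -, hφ⟩ := exists_seq_of_forall_finset_exists (fun _ => True)
    (fun m n : ℕ => m < n ∧ b (u m) ≤ u n) fun s _ => by
      have hlate : ∀ᶠ n in atTop, ∀ m ∈ s, m < n ∧ b (u m) ≤ u n := (eventually_all_finset s).2
        fun m _ => (eventually_gt_atTop m).and (hu.eventually_ge_atTop (b (u m)))
      exact hlate.exists.imp fun n hn => ⟨trivial, hn⟩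
  exact ⟨φ, fun m n hmn => (hφ m n hmn).1, fun m n hmn => (hφ m n hmn).2⟩

section MetricSpace

variable {X : Type*} [MetricSpace X]

section Enlargement

variable {F G : Set X} {ε δ : ℝ}

lemma enl_eq_thickening (F : Set X) (ε : ℝ) : enl F ε = thickening ε F :=
  thickening_eq_biUnion_ball.symm

lemma mem_enl {x : X} : x ∈ enl F ε ↔ ∃ y ∈ F, dist x y < ε := by
  rw [enl_eq_thickening, mem_thickening_iff]

lemma enl_mono (hFG : F ⊆ G) (hεδ : ε ≤ δ) : enl F ε ⊆ enl G δ := by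
  rw [enl_eq_thickening, enl_eq_thickening]
  exact (thickening_mono hεδ F).trans (thickening_subset_of_subset δ hFG)

lemma subset_enl (hε : 0 < ε) : F ⊆ enl F ε := by
  rw [enl_eq_thickening]
  exact self_subset_thickening hε F

lemma enlIter_mono (hFG : F ⊆ G) (hεδ : ε ≤ δ) (n : ℕ) : enlIter F ε n ⊆ enlIter G δ n := by
  induction n with
  | zero => exact enl_mono hFG hεδ
  | succ n ih => exact enl_mono ih hεδ

lemma monotone_enlIter (hε : 0 < ε) : Monotone (enlIter F ε) :=
  monotone_nat_of_le_succ fun _ => subset_enl hε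

lemma mem_enlIter_succ {x y : X} {n : ℕ} (hxy : dist x y < ε) (hy : y ∈ enlIter F ε n) :
    x ∈ enlIter F ε (n + 1) :=
  mem_enl.2 ⟨y, hy, hxy⟩

lemma BourbakiBounded.exists_bound_enlIter (hF : BourbakiBounded F) {f : X → ℝ}
    (hf : UniformContinuous f) :
    ∃ ε > 0, ∀ n, ∃ M, ∀ x ∈ enlIter F ε n, |f x| ≤ M := by
  obtain ⟨ε, hε, hfε⟩ := Metric.uniformContinuous_iff.1 hf 1 one_pos
  have bound_enl {A : Set X} : (∃ M, ∀ x ∈ A, |f x| ≤ M) → ∃ M, ∀ x ∈ enl A ε, |f x| ≤ M := by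
    rintro ⟨M, hM⟩
    refine ⟨M + 1, fun x hx => ?_⟩
    obtain ⟨y, hy, hxy⟩ := mem_enl.1 hx
    have hfxy : |f x - f y| < 1 := hfε hxy
    linarith [hM y hy, abs_sub_abs_le_abs_sub (f x) (f y)]
  refine ⟨ε, hε, fun n => ?_⟩
  induction n with
  | zero => exact bound_enl (hF f hf)
  | succ n ih => exact bound_enl ih

end Enlargement

/-- The points of `X` that are not `δ`-isolated, i.e. have another point within distance `δ`. -/
def nonIsolated (X : Type*) [MetricSpace X] (δ : ℝ) : Set X :=
  {x | ∃ y, x ≠ y ∧ dist x y < δ}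

lemma nonIsolated_mono : Monotone (nonIsolated X) :=
  fun _ _ hδ _ ⟨y, hne, hxy⟩ => ⟨y, hne, hxy.trans_le hδ⟩

lemma unifIsolated_univ_diff_iff {B : Set X} :
    UnifIsolated (univ \ B) ↔ ∃ δ > 0, nonIsolated X δ ⊆ B := by
  refine exists_congr fun δ => and_congr_right fun hδ =>
    ⟨fun h x ⟨y, hne, hxy⟩ => ?_, fun h x hx => ?_⟩
  · by_contra hx
    have hy : y ∈ ball x δ := mem_ball'.2 hxy
    rw [h x ⟨mem_univ x, hx⟩] at hy
    exact hne hy.symm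
  · refine (subset_singleton_iff.2 fun y hy => ?_).antisymm
      (singleton_subset_iff.2 (mem_ball_self hδ))
    by_contra hne
    exact hx.2 (h ⟨y, Ne.symm hne, mem_ball'.1 hy⟩)

lemma uniformContinuous_of_nonIsolated_subset {h : X → ℝ} {B : Set X} {δ : ℝ} (hδ : 0 < δ)
    (hB : nonIsolated X δ ⊆ B) (hh : UniformContinuousOn h B) : UniformContinuous h := by
  refine Metric.uniformContinuous_iff.2 fun e he => ?_
  obtain ⟨η, hη, hhη⟩ := Metric.uniformContinuousOn_iff.1 hh e he
  refine ⟨min δ η, lt_min hδ hη, fun {x y} hxy => ?_⟩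
  rcases eq_or_ne x y with rfl | hne
  · rwa [dist_self]
  · have hxyδ : dist x y < δ := hxy.trans_le (min_le_left _ _)
    exact hhη x (hB ⟨y, hne, hxyδ⟩) y (hB ⟨x, hne.symm, dist_comm x y ▸ hxyδ⟩)
      (hxy.trans_le (min_le_right _ _))

lemma BourbakiBounded.isRingUC {F : Set X} (hF : BourbakiBounded F)
    (hiso : ∀ ε > 0, ∃ n, ∃ δ > 0, nonIsolated X δ ⊆ enlIter F ε n) : IsRingUC X := by
  intro f g hf hg
  obtain ⟨εf, hεf, hfbdd⟩ := hF.exists_bound_enlIter hf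
  obtain ⟨εg, hεg, hgbdd⟩ := hF.exists_bound_enlIter hg
  obtain ⟨n, δ, hδ, hsub⟩ := hiso (min εf εg) (lt_min hεf hεg)
  obtain ⟨M, hM⟩ := hfbdd n
  obtain ⟨N, hN⟩ := hgbdd n
  exact uniformContinuous_of_nonIsolated_subset hδ hsub <|
    uniformContinuousOn_mul_of_bounded hf.uniformContinuousOn hg.uniformContinuousOn
      (fun x hx => hM x (enlIter_mono subset_rfl (min_le_left _ _) n hx))
      (fun x hx => hN x (enlIter_mono subset_rfl (min_le_right _ _) n hx))

section RingBound

variable {f : X → ℝ}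

lemma exists_close_pairs_of_unbounded (hf : ∀ δ > 0, ∀ M, ∃ x ∈ nonIsolated X δ, M < |f x|)
    {η : ℝ} (hη : 0 < η) :
    ∃ x y : ℕ → X, (∀ n, x n ≠ y n) ∧ (∀ n, dist (x n) (y n) < η) ∧
      Tendsto (fun n => dist (x n) (y n)) atTop (𝓝 0) ∧ (∀ n, 2 ^ n ≤ |f (x n)|) ∧
      Pairwise fun m n => 3 ≤ |f (x m) - f (x n)| := by
  choose x hx hfx using fun n : ℕ =>
    hf (min η (1 / (n + 1))) (lt_min hη Nat.one_div_pos_of_nat) (n + 1)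
  choose y hne hxy using hx
  have hxη (n : ℕ) : dist (x n) (y n) < η := (hxy n).trans_le (min_le_left _ _)
  have hx0 : Tendsto (fun n => dist (x n) (y n)) atTop (𝓝 0) :=
    squeeze_zero (fun _ => dist_nonneg) (fun n => (hxy n).le.trans (min_le_right _ _))
      tendsto_one_div_add_atTop_nhds_zero_nat
  have hfx_top : Tendsto (fun n => |f (x n)|) atTop atTop :=
    tendsto_atTop_mono (fun n => by linarith [hfx n]) tendsto_natCast_atTop_atTop
  obtain ⟨φ, hφ, hgap⟩ := exists_strictMono_forall_lt_le hfx_top fun t => 2 * t + 3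
  have hpow (n : ℕ) : 2 ^ n ≤ |f (x (φ n))| := by
    induction n with
    | zero =>
      rw [pow_zero]
      linarith [hfx (φ 0), Nat.cast_nonneg (α := ℝ) (φ 0)]
    | succ n ih =>
      rw [pow_succ]
      linarith [hgap n (n + 1) n.lt_succ_self]
  have hsep {m n : ℕ} (hmn : m < n) : 3 ≤ |f (x (φ n)) - f (x (φ m))| := by
    linarith [hgap m n hmn, abs_nonneg (f (x (φ m))),
      abs_sub_abs_le_abs_sub (f (x (φ n))) (f (x (φ m)))]
  refine ⟨x ∘ φ, y ∘ φ, fun n => hne (φ n), fun n => hxη (φ n), hx0.comp hφ.tendsto_atTop, hpow,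
    fun m n hmn => ?_⟩
  rcases hmn.lt_or_gt with hlt | hlt
  · exact abs_sub_comm (f (x (φ m))) _ ▸ hsep hlt
  · exact hsep hlt

lemma exists_uniformContinuous_mul_eq_one_zero (hf : UniformContinuous f)
    (hunb : ∀ δ > 0, ∀ M, ∃ x ∈ nonIsolated X δ, M < |f x|) :
    ∃ g : X → ℝ, UniformContinuous g ∧ ∃ x y : ℕ → X,
      Tendsto (fun n => dist (x n) (y n)) atTop (𝓝 0) ∧
      ∀ n, f (x n) * g (x n) = 1 ∧ f (y n) * g (y n) = 0 := by
  obtain ⟨η, hη, hfη⟩ := Metric.uniformContinuous_iff.1 hf 1 one_pos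
  obtain ⟨x, y, hne, hxyη, hxy0, hpow, hsep⟩ := exists_close_pairs_of_unbounded hunb hη
  have hsummable : Summable fun n => |(f (x n))⁻¹| := by
    refine Summable.of_nonneg_of_le (fun _ => abs_nonneg _) (fun n => ?_) summable_geometric_two
    rw [abs_inv, one_div, inv_pow]
    exact inv_anti₀ (by positivity) (hpow n)
  obtain ⟨g, hg, hg0, hgx⟩ :=
    exists_uniformContinuous_interpolation (x := x) (fun n => dist_pos.2 (hne n)) hsummable
  have notMem_ball {m n : ℕ} (hmn : m ≠ n) {z : X} (hz : |f z - f (x n)| ≤ 1) :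
      z ∉ ball (x m) (dist (x m) (y m)) := by
    intro hmem
    have hzm : |f z - f (x m)| < 1 := hfη (hmem.trans (hxyη m))
    have htri := abs_sub_le (f (x m)) (f z) (f (x n))
    rw [abs_sub_comm (f (x m)) (f z)] at htri
    linarith [hsep hmn]
  refine ⟨g, hg, x, y, hxy0, fun n => ⟨?_, ?_⟩⟩
  · have hfx : f (x n) ≠ 0 := abs_pos.1 (lt_of_lt_of_le (by positivity) (hpow n))
    rw [hgx n fun m hmn => notMem_ball hmn (by simp), mul_inv_cancel₀ hfx]
  · rw [hg0 (y n) fun m => ?_, mul_zero]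
    rcases eq_or_ne m n with rfl | hmn
    · rw [mem_ball', lt_self_iff_false]
      exact not_false
    · refine notMem_ball hmn (LT.lt.le ?_)
      rw [abs_sub_comm]
      exact hfη (hxyη n)

end RingBound

lemma IsRingUC.exists_bound_nonIsolated (hX : IsRingUC X) {f : X → ℝ} (hf : UniformContinuous f) :
    ∃ δ > 0, ∃ M, ∀ x ∈ nonIsolated X δ, |f x| ≤ M := by
  by_contra! hunb
  obtain ⟨g, hg, x, y, hxy, hfg⟩ := exists_uniformContinuous_mul_eq_one_zero hf hunb
  obtain ⟨δ, hδ, hfgδ⟩ := Metric.uniformContinuous_iff.1 (hX f g hf hg) 1 one_pos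
  obtain ⟨n, hn⟩ := (hxy.eventually_lt_const hδ).exists
  have hlt := hfgδ hn
  rw [(hfg n).1, (hfg n).2, Real.dist_eq, sub_zero, abs_one] at hlt
  exact hlt.false

section ChainLevel

/-- The level of `x` over the sequence `u`: the least `j + n` such that an `ε`-chain with `n + 1`
steps leads from `u j` to `x`. It is `0` (a junk value) at points that no such chain reaches. -/
noncomputable def chainLevel (u : ℕ → X) (ε : ℝ) (x : X) : ℕ :=
  sInf {k | ∃ j n, j + n = k ∧ x ∈ enlIter {u j} ε n}

variable {u : ℕ → X} {ε : ℝ}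

lemma chainLevel_le {x : X} {j n : ℕ} (hx : x ∈ enlIter {u j} ε n) : chainLevel u ε x ≤ j + n :=
  Nat.sInf_le ⟨j, n, rfl, hx⟩

lemma exists_add_eq_chainLevel {x : X} {j n : ℕ} (hx : x ∈ enlIter {u j} ε n) :
    ∃ i m, i + m = chainLevel u ε x ∧ x ∈ enlIter {u i} ε m :=
  Nat.sInf_mem (s := {k | ∃ i m, i + m = k ∧ x ∈ enlIter {u i} ε m}) ⟨j + n, j, n, rfl, hx⟩

lemma chainLevel_le_add_one {x y : X} (hxy : dist x y < ε) :
    chainLevel u ε x ≤ chainLevel u ε y + 1 := by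
  by_cases hreach : ∃ j n, x ∈ enlIter {u j} ε n
  · obtain ⟨j, n, hx⟩ := hreach
    have hy : y ∈ enlIter {u j} ε (n + 1) := mem_enlIter_succ (dist_comm x y ▸ hxy) hx
    obtain ⟨i, m, him, hyi⟩ := exists_add_eq_chainLevel hy
    rw [← him, add_assoc]
    exact chainLevel_le (mem_enlIter_succ hxy hyi)
  · have hempty : {k | ∃ j n, j + n = k ∧ x ∈ enlIter {u j} ε n} = ∅ :=
      eq_empty_of_forall_notMem fun _ ⟨j, n, _, hx⟩ => hreach ⟨j, n, hx⟩
    rw [chainLevel, hempty, Nat.sInf_empty]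
    exact Nat.zero_le _

lemma abs_chainLevel_sub_le_one (x y : X) (hxy : dist x y < ε) :
    |(chainLevel u ε x : ℝ) - chainLevel u ε y| ≤ 1 := by
  have h₁ : (chainLevel u ε x : ℝ) ≤ chainLevel u ε y + 1 := mod_cast chainLevel_le_add_one hxy
  have h₂ : (chainLevel u ε y : ℝ) ≤ chainLevel u ε x + 1 :=
    mod_cast chainLevel_le_add_one (dist_comm x y ▸ hxy)
  exact abs_le.2 ⟨by linarith, by linarith⟩

lemma le_chainLevel (hε : 0 < ε) {i : ℕ} (hu : ∀ j < i, u i ∉ enlIter {u j} ε i) :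
    i ≤ chainLevel u ε (u i) := by
  have hself : u i ∈ enlIter {u i} ε 0 := subset_enl hε (mem_singleton (u i))
  obtain ⟨j, n, hjn, hmem⟩ := exists_add_eq_chainLevel hself
  by_contra! hlt
  exact hu j (by lia) (monotone_enlIter hε (by lia) hmem)

end ChainLevel

/-- Every uniformly continuous real function is bounded on some member of the sequence `A`. For a
constant sequence this is Bourbaki boundedness of its value. -/
def EventuallyBourbakiBounded (A : ℕ → Set X) : Prop :=
  ∀ f : X → ℝ, UniformContinuous f → ∃ k, ∃ M, ∀ x ∈ A k, |f x| ≤ M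

lemma exists_seq_notMem_enlIter {A : ℕ → Set X} (hA : Antitone A) {ε : ℝ} (hε : 0 < ε) {m : ℕ}
    (hfar : ∀ P : Set X, P.Finite → P ⊆ A m → ∀ n k, ¬ A k ⊆ enlIter P ε n) :
    ∃ u : ℕ → X, (∀ i, u i ∈ A i) ∧ ∀ i, ∀ j < i, u i ∉ enlIter {u j} ε i := by
  -- The first component of a pair is both the index of a member of `A` and a number of steps.
  obtain ⟨v, hvA, hv⟩ := exists_seq_of_forall_finset_exists
    (fun p : ℕ × X => m ≤ p.1 ∧ p.2 ∈ A p.1)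
    (fun p q => p.1 < q.1 ∧ q.2 ∉ enlIter {p.2} ε q.1) fun s hs => by
      obtain ⟨k, hmk, hk⟩ : ∃ k, m ≤ k ∧ ∀ p ∈ s, p.1 < k :=
        ((eventually_ge_atTop m).and <| (eventually_all_finset s).2
          fun p _ => eventually_gt_atTop p.1).exists
      have hsub : Prod.snd '' (s : Set (ℕ × X)) ⊆ A m :=
        image_subset_iff.2 fun p hp => hA (hs p hp).1 (hs p hp).2
      obtain ⟨x, hxA, hx⟩ := not_subset.1 (hfar _ (s.finite_toSet.image _) hsub k k)
      exact ⟨(k, x), ⟨hmk, hxA⟩, fun p hp => ⟨hk p hp, fun hxp => hx <|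
        enlIter_mono (singleton_subset_iff.2 (mem_image_of_mem _ hp)) le_rfl k hxp⟩⟩
  have hle (i : ℕ) : i ≤ (v i).1 := StrictMono.le_apply (f := fun i => (v i).1)
    fun i j hij => (hv i j hij).1
  exact ⟨fun i => (v i).2, fun i => hA (hle i) (hvA i).2, fun i j hji hmem =>
    (hv j i hji).2 (monotone_enlIter hε (hle i) hmem)⟩

namespace EventuallyBourbakiBounded

variable {A : ℕ → Set X}

lemma exists_finite_subset_enlIter (hbdd : EventuallyBourbakiBounded A) (hA : Antitone A)
    {ε : ℝ} (hε : 0 < ε) (m : ℕ) :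
    ∃ P : Set X, P.Finite ∧ P ⊆ A m ∧ ∃ n k, A k ⊆ enlIter P ε n := by
  by_contra! hfar
  obtain ⟨u, huA, hu⟩ := exists_seq_notMem_enlIter hA hε hfar
  obtain ⟨f, hf, hfL⟩ := exists_uniformContinuous_abs_sub_le hε zero_le_one
    (abs_chainLevel_sub_le_one (u := u))
  obtain ⟨k, M, hM⟩ := hbdd f hf
  obtain ⟨i, hki, hMi⟩ : ∃ i, k ≤ i ∧ M + 1 < (i : ℝ) :=
    ((eventually_ge_atTop k).and
      (tendsto_natCast_atTop_atTop.eventually_gt_atTop (M + 1))).exists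
  have hlevel : (i : ℝ) ≤ chainLevel u ε (u i) := mod_cast le_chainLevel hε (hu i)
  have hfu : f (u i) ≤ M := (le_abs_self _).trans (hM (u i) (hA hki (huA i)))
  linarith [(abs_le.1 (hfL (u i))).1]

lemma bourbakiBounded_iUnion (hbdd : EventuallyBourbakiBounded A) (hA : Antitone A)
    {P : ℕ → Set X} (hPfin : ∀ k, (P k).Finite) (hPA : ∀ k, P k ⊆ A k) :
    BourbakiBounded (⋃ k, P k) := by
  intro f hf
  obtain ⟨K, M, hM⟩ := hbdd f hf
  have hfin : (⋃ k ∈ Iio K, P k).Finite := (finite_Iio K).biUnion fun k _ => hPfin k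
  obtain ⟨N, hN⟩ := (hfin.image fun x => |f x|).bddAbove
  refine ⟨max M N, fun x hx => ?_⟩
  obtain ⟨k, hxk⟩ := mem_iUnion.1 hx
  rcases lt_or_ge k K with hkK | hKk
  · exact le_max_of_le_right (hN (mem_image_of_mem _ (mem_biUnion hkK hxk)))
  · exact le_max_of_le_left (hM x (hA hKk (hPA k hxk)))

lemma exists_bourbakiBounded (hbdd : EventuallyBourbakiBounded A) (hA : Antitone A) :
    ∃ F : Set X, BourbakiBounded F ∧ ∀ ε > 0, ∃ n k, A k ⊆ enlIter F ε n := by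
  choose P hPfin hPA n k hsub using fun m : ℕ =>
    hbdd.exists_finite_subset_enlIter hA (Nat.one_div_pos_of_nat (α := ℝ) (n := m)) m
  refine ⟨⋃ m, P m, hbdd.bourbakiBounded_iUnion hA hPfin hPA, fun ε hε => ?_⟩
  obtain ⟨m, hm⟩ := exists_nat_one_div_lt hε
  exact ⟨n m, k m, (hsub m).trans (enlIter_mono (subset_iUnion P m) hm.le _)⟩

end EventuallyBourbakiBounded

lemma antitone_nonIsolated_one_div : Antitone fun k : ℕ => nonIsolated X (1 / ((k : ℝ) + 1)) :=
  fun _ _ hkl => nonIsolated_mono (Nat.one_div_le_one_div hkl)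

lemma IsRingUC.eventuallyBourbakiBounded (hX : IsRingUC X) :
    EventuallyBourbakiBounded fun k : ℕ => nonIsolated X (1 / ((k : ℝ) + 1)) := by
  intro f hf
  obtain ⟨δ, hδ, M, hM⟩ := hX.exists_bound_nonIsolated hf
  obtain ⟨k, hk⟩ := exists_nat_one_div_lt hδ
  exact ⟨k, M, fun x hx => hM x (nonIsolated_mono hk.le hx)⟩

end MetricSpace

theorem stmt3 {X : Type*} [MetricSpace X] :
    IsRingUC X ↔
      ∃ F : Set X, BourbakiBounded F ∧
        ∀ ε > (0 : ℝ), ∃ n : ℕ, UnifIsolated (Set.univ \ enlIter F ε n) := by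
  simp only [unifIsolated_univ_diff_iff]
  constructor
  · intro hX
    obtain ⟨F, hF, hsub⟩ :=
      hX.eventuallyBourbakiBounded.exists_bourbakiBounded antitone_nonIsolated_one_div
    refine ⟨F, hF, fun ε hε => ?_⟩
    obtain ⟨n, k, hnk⟩ := hsub ε hε
    exact ⟨n, 1 / (k + 1), Nat.one_div_pos_of_nat, hnk⟩
  · rintro ⟨F, hF, hiso⟩
    exact hF.isRingUC hiso
end

section
/- Let (X,d) be a metric space and let L ⊆ X be nonempty, and let δ_L be the metric defined by δ_L(x,y) = d(x,y) + max{d(x,L), d(y,L)} for x ≠ y and δ_L(x,x) = 0. Then the following are equivalent: (a) for every ε > 0 the set X \ B_d(L,ε) is uniformly isolated in (X,d); (b) d and δ_L are uniformly equivalent on X, i.e., the identity maps (X,d) → (X,δ_L) and (X,δ_L) → (X,d) are both uniformly continuous. -/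
open Classical in
/-- The metric `δ_L(x,y) = d(x,y) + max{d(x,L), d(y,L)}` for `x ≠ y`, and
`δ_L(x,x) = 0`. -/
noncomputable def deltaL {X : Type*} [MetricSpace X] (L : Set X) (x y : X) : ℝ :=
  if x = y then 0 else dist x y + max (Metric.infDist x L) (Metric.infDist y L)

/-!
Since `d ≤ δ_L`, only the uniform continuity of `(X, d) → (X, δ_L)` is at stake. Uniform isolation
of `X \ B(L, ε)` says that distinct points at small distance lie within `ε` of `L`. As
`max (d(x, L)) (d(y, L)) ≤ δ_L(x, y) = d(x, y) + max (d(x, L)) (d(y, L))` for `x ≠ y`, asking this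
for all `ε` amounts to making `δ_L(x, y)` small uniformly as `d(x, y)` becomes small.
-/

section

variable {X : Type*} [MetricSpace X] {L : Set X} {x y : X} {ε : ℝ}

theorem mem_enl_iff_infDist_lt (hL : L.Nonempty) : x ∈ enl L ε ↔ Metric.infDist x L < ε := by
  rw [enl, ← Metric.thickening_eq_biUnion_ball, Metric.mem_thickening_iff_infDist_lt hL]

theorem unifIsolated_iff_exists_eq_of_dist_lt {A : Set X} :
    UnifIsolated A ↔ ∃ η > (0 : ℝ), ∀ x ∈ A, ∀ y, dist x y < η → x = y := by
  refine exists_congr fun η => and_congr_right fun hη => forall₂_congr fun x _ => ?_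
  rw [Set.eq_singleton_iff_unique_mem, and_iff_right (Metric.mem_ball_self hη)]
  simp only [Metric.mem_ball', eq_comm]

theorem unifIsolated_univ_diff_enl_iff (hL : L.Nonempty) :
    UnifIsolated (Set.univ \ enl L ε) ↔
      ∃ η > (0 : ℝ), ∀ x y : X, dist x y < η → x ≠ y → Metric.infDist x L < ε := by
  rw [unifIsolated_iff_exists_eq_of_dist_lt]
  refine exists_congr fun η => and_congr_right fun _ => forall_congr' fun x => ?_
  rw [← mem_enl_iff_infDist_lt hL, Set.mem_sdiff, and_iff_right (Set.mem_univ x), forall_comm]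
  exact forall_congr' fun y => by tauto

@[simp]
theorem deltaL_self (L : Set X) (x : X) : deltaL L x x = 0 := if_pos rfl

theorem deltaL_of_ne (L : Set X) (hxy : x ≠ y) :
    deltaL L x y = dist x y + max (Metric.infDist x L) (Metric.infDist y L) := if_neg hxy

theorem dist_le_deltaL (L : Set X) (x y : X) : dist x y ≤ deltaL L x y := by
  obtain rfl | hxy := eq_or_ne x y
  · simp
  · rw [deltaL_of_ne L hxy]
    exact le_add_of_nonneg_right (le_max_of_le_left Metric.infDist_nonneg)

theorem infDist_le_deltaL_of_ne (L : Set X) (hxy : x ≠ y) :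
    Metric.infDist x L ≤ deltaL L x y := by
  rw [deltaL_of_ne L hxy]
  exact (le_max_left _ _).trans (le_add_of_nonneg_left dist_nonneg)

theorem forall_exists_deltaL_lt_iff :
    (∀ ε > (0 : ℝ), ∃ η > (0 : ℝ), ∀ x y : X, dist x y < η → deltaL L x y < ε) ↔
      ∀ ε > (0 : ℝ), ∃ η > (0 : ℝ), ∀ x y : X,
        dist x y < η → x ≠ y → Metric.infDist x L < ε := by
  constructor <;> intro h ε hε
  · obtain ⟨η, hη, deltaL_lt⟩ := h ε hε
    exact ⟨η, hη, fun x y hxy hne => (infDist_le_deltaL_of_ne L hne).trans_lt (deltaL_lt x y hxy)⟩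
  · obtain ⟨η, hη, infDist_lt⟩ := h (ε / 2) (half_pos hε)
    refine ⟨min η (ε / 2), lt_min hη (half_pos hε), fun x y hxy => ?_⟩
    obtain ⟨hdist_η, hdist_ε⟩ := lt_min_iff.mp hxy
    obtain rfl | hne := eq_or_ne x y
    · rwa [deltaL_self]
    have hmax : max (Metric.infDist x L) (Metric.infDist y L) < ε / 2 :=
      max_lt (infDist_lt x y hdist_η hne) (infDist_lt y x (dist_comm x y ▸ hdist_η) hne.symm)
    calc deltaL L x y = dist x y + max (Metric.infDist x L) (Metric.infDist y L) :=
          deltaL_of_ne L hne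
      _ < ε / 2 + ε / 2 := add_lt_add hdist_ε hmax
      _ = ε := add_halves ε

end

theorem stmt18 {X : Type*} [MetricSpace X] (L : Set X) (hL : L.Nonempty) :
    (∀ ε > (0 : ℝ), UnifIsolated (Set.univ \ enl L ε)) ↔
      ((∀ ε > (0 : ℝ), ∃ η > (0 : ℝ), ∀ x y : X, dist x y < η → deltaL L x y < ε) ∧
       (∀ ε > (0 : ℝ), ∃ η > (0 : ℝ), ∀ x y : X, deltaL L x y < η → dist x y < ε)) := by
  have dist_lt_of_deltaL_lt :
      ∀ ε > (0 : ℝ), ∃ η > (0 : ℝ), ∀ x y : X, deltaL L x y < η → dist x y < ε :=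
    fun ε hε => ⟨ε, hε, fun x y => (dist_le_deltaL L x y).trans_lt⟩
  rw [and_iff_left dist_lt_of_deltaL_lt, forall_exists_deltaL_lt_iff]
  exact forall₂_congr fun _ _ => unifIsolated_univ_diff_enl_iff hL
end
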